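/- Weak (non-strict) form of Theorem 1. Let u₀ be more specific than u₁ (E_{u₀} ⊊ E_{u₁}), let o^t ∈ C be the target with ℒ u₀ o^t = 1 and ℒ u₁ o^t = 1, and let P be a hidden-object prior such that every object o with P(o) > 0 satisfies o ∈ C or ℒ u₀ o = 0. Then ∑_{o_h : O} P(o_h)·(log L₀(o^t | u₀, C ∪ {o_h}) − log L₀(o^t | u₁, C ∪ {o_h})) ≥ log L₀(o^t | u₀, C) − log L₀(o^t | u₁, C). -/

import Mathlib

open Finset Real

noncomputable section

/-- Literal listener: `L0 ℒ C u o = ℒ u o / ∑ o' ∈ C, ℒ u o'`. -/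
def L0 {O 𝒰 : Type*} (ℒ : 𝒰 → O → ℝ) (C : Finset O) (u : 𝒰) (o : O) : ℝ :=
  ℒ u o / ∑ o' ∈ C, ℒ u o'

/-!
Adding an object `oh ∉ C` to the context divides `L₀(· | u, C)` by `1 + ℒ u oh / ∑ o' ∈ C, ℒ u o'`.
The advantage of `u₀` over `u₁` at the target therefore does not shrink as long as `oh` weighs
relatively no more under `u₀` than under `u₁`, in particular if `u₀` is false of `oh`. Averaging
this pointwise inequality over the prior gives the result.
-/

/-- The difference of literal-listener log-probabilities `log L₀(o | u₀, C) - log L₀(o | u₁, C)`: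
the utility advantage of `u₀` over `u₁` for a speaker who refers to `o` in the context `C`. -/
def utilityDiff {O 𝒰 : Type*} (ℒ : 𝒰 → O → ℝ) (C : Finset O) (u₀ u₁ : 𝒰) (o : O) : ℝ :=
  log (L0 ℒ C u₀ o) - log (L0 ℒ C u₁ o)

lemma le_of_hasSum_mul_of_hasSum_one {ι : Type*} {w f : ι → ℝ} {c m : ℝ}
    (hw : ∀ i, 0 ≤ w i) (hw_one : HasSum w 1) (hf : ∀ i, 0 < w i → c ≤ f i)
    (hm : HasSum (fun i => w i * f i) m) : c ≤ m := by
  have weighted_le (i : ι) : w i * c ≤ w i * f i := by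
    rcases (hw i).eq_or_lt with hi | hi
    · simp [← hi]
    · exact mul_le_mul_of_nonneg_left (hf i hi) hi.le
  simpa using hasSum_le weighted_le (hw_one.mul_right c) hm

section LiteralListener

variable {O 𝒰 : Type*} {ℒ : 𝒰 → O → ℝ} {C : Finset O} {u u₀ u₁ : 𝒰} {o oT oh : O}

lemma L0_nonneg (hL : ∀ o, 0 ≤ ℒ u o) : 0 ≤ L0 ℒ C u o :=
  div_nonneg (hL o) (sum_nonneg fun o' _ => hL o')

lemma L0_pos (hL : ∀ o, 0 ≤ ℒ u o) (ho : o ∈ C) (hu : 0 < ℒ u o) : 0 < L0 ℒ C u o :=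
  div_pos hu (sum_pos' (fun o' _ => hL o') ⟨o, ho, hu⟩)

lemma L0_le_L0_of_eq_zero (h0 : ℒ u₀ o = 0) (hL₁ : ∀ o, 0 ≤ ℒ u₁ o) :
    L0 ℒ C u₀ o ≤ L0 ℒ C u₁ o := by
  rw [L0, h0, zero_div]
  exact L0_nonneg hL₁

variable [DecidableEq O]

lemma L0_insert (hoh : oh ∉ C) (hC : ∑ o' ∈ C, ℒ u o' ≠ 0) :
    L0 ℒ (insert oh C) u o = L0 ℒ C u o / (1 + L0 ℒ C u oh) := by
  rw [L0, L0, L0, sum_insert hoh, div_div, mul_one_add, mul_div_cancel₀ _ hC, add_comm]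

lemma log_L0_insert (hL : ∀ o, 0 ≤ ℒ u o) (ho : o ∈ C) (hu : 0 < ℒ u o) (hoh : oh ∉ C) :
    log (L0 ℒ (insert oh C) u o) = log (L0 ℒ C u o) - log (1 + L0 ℒ C u oh) := by
  have total_pos : 0 < ∑ o' ∈ C, ℒ u o' := sum_pos' (fun o' _ => hL o') ⟨o, ho, hu⟩
  have factor_pos : 0 < 1 + L0 ℒ C u oh := add_pos_of_pos_of_nonneg one_pos (L0_nonneg hL)
  rw [L0_insert hoh total_pos.ne', log_div (L0_pos hL ho hu).ne' factor_pos.ne']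

lemma utilityDiff_le_utilityDiff_insert (hL : ∀ u o, 0 ≤ ℒ u o) (hoT : oT ∈ C)
    (h0 : 0 < ℒ u₀ oT) (h1 : 0 < ℒ u₁ oT) (hoh : oh ∈ C ∨ L0 ℒ C u₀ oh ≤ L0 ℒ C u₁ oh) :
    utilityDiff ℒ C u₀ u₁ oT ≤ utilityDiff ℒ (insert oh C) u₀ u₁ oT := by
  by_cases hmem : oh ∈ C
  · rw [insert_eq_of_mem hmem]
  have factor_le : log (1 + L0 ℒ C u₀ oh) ≤ log (1 + L0 ℒ C u₁ oh) :=
    log_le_log (add_pos_of_pos_of_nonneg one_pos (L0_nonneg (hL u₀)))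
      (add_le_add_right (hoh.resolve_left hmem) 1)
  rw [utilityDiff, utilityDiff, log_L0_insert (hL u₀) hoT h0 hmem,
    log_L0_insert (hL u₁) hoT h1 hmem]
  linarith

end LiteralListener

-- For `oh ∉ C`, `L0 ℒ C u oh` is the weight of `oh` relative to `C`, not a probability.
theorem asym_utility_difference_ge_ego_general
    {O 𝒰 : Type*} [DecidableEq O]
    (ℒ : 𝒰 → O → ℝ) (hL : ∀ u o, 0 ≤ ℒ u o) (u₀ u₁ : 𝒰)
    (C : Finset O) (oT : O) (hoT : oT ∈ C) (h0 : 0 < ℒ u₀ oT) (h1 : 0 < ℒ u₁ oT)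
    (P : O → ℝ) (hP : ∀ o, 0 ≤ P o) (hPsum : HasSum P 1)
    (hPsupp : ∀ o, 0 < P o → o ∈ C ∨ L0 ℒ C u₀ o ≤ L0 ℒ C u₁ o)
    {m : ℝ} (hm : HasSum (fun oh => P oh * utilityDiff ℒ (insert oh C) u₀ u₁ oT) m) :
    utilityDiff ℒ C u₀ u₁ oT ≤ m :=
  le_of_hasSum_mul_of_hasSum_one hP hPsum
    (fun oh hoh => utilityDiff_le_utilityDiff_insert hL hoT h0 h1 (hPsupp oh hoh)) hm

/-- Weak (non-strict) form of Theorem 1. -/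
theorem asym_utility_difference_ge_ego
    {O 𝒰 : Type*} [DecidableEq O] [Fintype O]
    (ℒ : 𝒰 → O → ℝ) (hL : ∀ u o, ℒ u o = 0 ∨ ℒ u o = 1)
    (u₀ u₁ : 𝒰) (hspec : {o : O | ℒ u₀ o = 1} ⊂ {o : O | ℒ u₁ o = 1})
    (C : Finset O) (oT : O) (hoT : oT ∈ C)
    (h0 : ℒ u₀ oT = 1) (h1 : ℒ u₁ oT = 1)
    (P : O → ℝ) (hP : ∀ o, 0 ≤ P o) (hPsum : ∑ o : O, P o = 1)
    (hPsupp : ∀ o, 0 < P o → o ∈ C ∨ ℒ u₀ o = 0) :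
    (∑ oh : O, P oh *
        (Real.log (L0 ℒ (insert oh C) u₀ oT) - Real.log (L0 ℒ (insert oh C) u₁ oT))) ≥
      Real.log (L0 ℒ C u₀ oT) - Real.log (L0 ℒ C u₁ oT) := by
  have nonneg (u : 𝒰) (o : O) : 0 ≤ ℒ u o := by rcases hL u o with h | h <;> simp [h]
  exact asym_utility_difference_ge_ego_general ℒ nonneg u₀ u₁ C oT hoT
    (h0 ▸ one_pos) (h1 ▸ one_pos) P hP (hPsum ▸ hasSum_fintype P)
    (fun o ho => (hPsupp o ho).imp_right (L0_le_L0_of_eq_zero · (nonneg u₁))) (hasSum_fintype _)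

end
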